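/- Let N ≥ 2, 1 < p ≤ N and p − 1 < q < q_c, and let Ω ⊆ ℝ^N be an open set containing the closed unit ball. Let u be a strong solution of (E) on Ω ∖ {0} with u > 0 on Ω ∖ {0}, and assume liminf_{x→0} u(x)/μ_p(x) = ∞. Then lim_{x→0} |x|^{β_q} u(x) = λ_{N,p,q}; moreover, with M = max{ u(z) : |z| = 1 }, one has λ_{N,p,q} (|x|^{−β_q} − 1) ≤ u(x) ≤ λ_{N,p,q} (|x|^{−β_q} − 1) + M for all 0 < |x| < 1. -/

import Mathlib

open Metric Set Filter Topology MeasureTheory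

/-- The vector field `x ↦ |∇u(x)|^{p-2} ∇u(x)`. -/
noncomputable def pGradField {N : ℕ} (p : ℝ) (u : EuclideanSpace ℝ (Fin N) → ℝ)
    (x : EuclideanSpace ℝ (Fin N)) : EuclideanSpace ℝ (Fin N) :=
  ‖gradient u x‖ ^ (p - 2) • gradient u x

/-- A strong solution of `(E) : -Δ_p u + |∇u|^q = 0` on an open set `G ⊆ ℝ^N`. -/
def IsStrongSolution {N : ℕ} (p q : ℝ) (G : Set (EuclideanSpace ℝ (Fin N)))
    (u : EuclideanSpace ℝ (Fin N) → ℝ) : Prop :=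
  ContDiffOn ℝ 1 u G ∧
  ContDiffOn ℝ 3 u {x | x ∈ G ∧ gradient u x ≠ 0} ∧
  ∀ x ∈ G, DifferentiableAt ℝ (pGradField p u) x ∧
    LinearMap.trace ℝ (EuclideanSpace ℝ (Fin N))
      (fderiv ℝ (pGradField p u) x : EuclideanSpace ℝ (Fin N) →ₗ[ℝ] EuclideanSpace ℝ (Fin N))
      = ‖gradient u x‖ ^ q

/-- The fundamental solution of the p-Laplacian in `ℝ^N`. -/
noncomputable def mup (N : ℕ) (p : ℝ) (x : EuclideanSpace ℝ (Fin N)) : ℝ :=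
  if p < N then ((p - 1) / ((N : ℝ) - p)) * ‖x‖ ^ ((p - (N : ℝ)) / (p - 1))
  else -Real.log ‖x‖


section Radial

variable {E : Type*} [NormedAddCommGroup E] [InnerProductSpace ℝ E]

lemma hasFDerivAt_norm_of_ne_zero {x : E} (hx : x ≠ 0) :
    HasFDerivAt (fun y : E => ‖y‖) (‖x‖⁻¹ • innerSL ℝ x) x := by
  have hx' : ‖x‖ ≠ 0 := norm_ne_zero_iff.2 hx
  have h := ((hasFDerivAt_id x).norm_sq).sqrt (by simpa using hx)
  simp only [id, Real.sqrt_sq (norm_nonneg _)] at h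
  refine h.congr_fderiv ?_
  ext y
  simp
  field_simp

lemma hasFDerivAt_radial_smul {φ : ℝ → ℝ} {φ' : ℝ} {x : E} (hx : x ≠ 0)
    (hφ : HasDerivAt φ φ' ‖x‖) :
    HasFDerivAt (fun y : E => φ ‖y‖ • y)
      (φ ‖x‖ • ContinuousLinearMap.id ℝ E + (φ' / ‖x‖) • (innerSL ℝ x).smulRight x) x := by
  have h := (hφ.comp_hasFDerivAt x (hasFDerivAt_norm_of_ne_zero hx)).fun_smul (hasFDerivAt_id x)
  refine h.congr_fderiv ?_
  ext y
  simp [smul_smul, div_eq_mul_inv, mul_assoc]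

lemma hasGradientAt_radial [CompleteSpace E] {V : ℝ → ℝ} {V' : ℝ} {x : E} (hx : x ≠ 0)
    (hV : HasDerivAt V V' ‖x‖) :
    HasGradientAt (fun y : E => V ‖y‖) ((V' / ‖x‖) • x) x := by
  rw [hasGradientAt_iff_hasFDerivAt]
  refine (hV.comp_hasFDerivAt x (hasFDerivAt_norm_of_ne_zero hx)).congr_fderiv ?_
  ext y
  simp [div_eq_mul_inv, mul_assoc]

/-- The divergence of the radial field `φ(|x|) x`. -/
lemma trace_fderiv_radial_smul [FiniteDimensional ℝ E] {φ : ℝ → ℝ} {φ' : ℝ} {x : E} (hx : x ≠ 0)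
    (hφ : HasDerivAt φ φ' ‖x‖) :
    LinearMap.trace ℝ E (fderiv ℝ (fun y : E => φ ‖y‖ • y) x : E →ₗ[ℝ] E)
      = Module.finrank ℝ E * φ ‖x‖ + ‖x‖ * φ' := by
  have hx' : ‖x‖ ≠ 0 := norm_ne_zero_iff.2 hx
  rw [(hasFDerivAt_radial_smul hx hφ).fderiv]
  have : ((φ ‖x‖ • ContinuousLinearMap.id ℝ E + (φ' / ‖x‖) • (innerSL ℝ x).smulRight x :
      E →L[ℝ] E) : E →ₗ[ℝ] E)
      = φ ‖x‖ • LinearMap.id + (φ' / ‖x‖) • ((innerSL ℝ x : E →L[ℝ] ℝ) : E →ₗ[ℝ] ℝ).smulRight x := by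
    ext; simp
  rw [this, map_add, map_smul, map_smul, LinearMap.trace_id, LinearMap.trace_smulRight]
  simp
  field_simp

end Radial

section SecondOrder

variable {E : Type*} [NormedAddCommGroup E] [InnerProductSpace ℝ E]

/-- The Hessian is negative semidefinite at a local maximum. -/
lemma IsLocalMax.inner_hessian_nonpos [CompleteSpace E] {f : E → ℝ} {F : E → E} {L : E →L[ℝ] E}
    {x : E} (hmax : IsLocalMax f x) (hf : ∀ᶠ y in 𝓝 x, HasGradientAt f (F y) y)
    (hF : HasFDerivAt F L x) (e : E) : inner ℝ (L e) e ≤ 0 := by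
  by_contra! hpos
  have hline : ∀ t : ℝ, HasDerivAt (fun t : ℝ => x + t • e) e t := fun t => by
    simpa using ((hasDerivAt_id t).smul_const e).const_add x
  have htend : Tendsto (fun t : ℝ => x + t • e) (𝓝 0) (𝓝 x) := by
    simpa using (hline 0).continuousAt.tendsto
  have hd : ∀ᶠ t : ℝ in 𝓝 0, HasDerivAt (fun t : ℝ => f (x + t • e))
      (inner ℝ (F (x + t • e)) e) t := by
    filter_upwards [htend.eventually hf] with t ht
    simpa [Function.comp_def] using
      (hasGradientAt_iff_hasFDerivAt.1 ht).comp_hasDerivAt t (hline t)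
  have hderiv : deriv (fun t : ℝ => f (x + t • e)) =ᶠ[𝓝 0] fun t => inner ℝ (F (x + t • e)) e :=
    hd.mono fun t ht => ht.deriv
  have hF' : HasDerivAt (fun t : ℝ => F (x + t • e)) (L e) 0 :=
    HasFDerivAt.comp_hasDerivAt (0 : ℝ) (by simpa using hF) (hline 0)
  have hsecond : HasDerivAt (fun t : ℝ => inner ℝ (F (x + t • e)) e) (inner ℝ (L e) e) 0 := by
    simpa using hF'.inner ℝ (hasDerivAt_const (0 : ℝ) e)
  have hlmax : IsLocalMax (fun t : ℝ => f (x + t • e)) 0 := by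
    simpa [IsLocalMax, IsMaxFilter] using htend.eventually hmax
  have hlmin : IsLocalMin (fun t : ℝ => f (x + t • e)) 0 := by
    refine isLocalMin_of_deriv_deriv_pos ?_ hlmax.deriv_eq_zero hd.self_of_nhds.continuousAt
    rwa [hderiv.deriv_eq, hsecond.deriv]
  have hconst : (fun t : ℝ => f (x + t • e)) =ᶠ[𝓝 0] fun _ => f (x + (0 : ℝ) • e) := by
    filter_upwards [hlmax, hlmin] with t h1 h2 using le_antisymm h1 h2
  have : deriv (deriv fun t : ℝ => f (x + t • e)) 0 = 0 := by
    rw [hconst.deriv.deriv_eq]; simp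
  rw [hderiv.deriv_eq, hsecond.deriv] at this
  exact hpos.ne' this

/-- The linearised `p`-Laplacian of a negative semidefinite Hessian is nonpositive. -/
lemma trace_linearized_pLaplacian_nonpos [FiniteDimensional ℝ E] {p : ℝ} (hp : 1 < p) {ξ : E}
    (hξ : ξ ≠ 0) {L : E →L[ℝ] E} (hL : ∀ e, inner ℝ (L e) e ≤ 0) :
    LinearMap.trace ℝ E
      (((‖ξ‖ ^ (p - 2) • ContinuousLinearMap.id ℝ E +
        ((p - 2) * ‖ξ‖ ^ (p - 2 - 1) / ‖ξ‖) • (innerSL ℝ ξ).smulRight ξ).comp L : E →L[ℝ] E)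
          : E →ₗ[ℝ] E) ≤ 0 := by
  have hn : 0 < ‖ξ‖ := norm_pos_iff.2 hξ
  set η : E := ‖ξ‖⁻¹ • ξ with hη
  have hη1 : ‖η‖ = 1 := by rw [hη, norm_smul, norm_inv, norm_norm, inv_mul_cancel₀ hn.ne']
  have hξη : ξ = ‖ξ‖ • η := by rw [hη, smul_inv_smul₀ hn.ne']
  have horth : Orthonormal ℝ ((↑) : ({η} : Set E) → E) := by
    rw [orthonormal_iff_ite]
    rintro ⟨a, ha⟩ ⟨b, hb⟩
    rw [mem_singleton_iff] at ha hb
    subst ha hb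
    simp [hη1]
  obtain ⟨s, B, hs, hB⟩ := horth.exists_orthonormalBasis_extension
  rw [LinearMap.trace_eq_sum_inner _ B]
  refine Finset.sum_nonpos fun i _ => ?_
  have key : inner ℝ (B i) ((((‖ξ‖ ^ (p - 2) • ContinuousLinearMap.id ℝ E +
        ((p - 2) * ‖ξ‖ ^ (p - 2 - 1) / ‖ξ‖) • (innerSL ℝ ξ).smulRight ξ).comp L : E →L[ℝ] E)
          : E →ₗ[ℝ] E) (B i)) =
      ‖ξ‖ ^ (p - 2) * (inner ℝ (L (B i)) (B i) +
        (p - 2) * (inner ℝ η (L (B i)) * inner ℝ (B i) η)) := by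
    have h1 : ‖ξ‖ ^ (p - 2 - 1) = ‖ξ‖ ^ (p - 2) / ‖ξ‖ := Real.rpow_sub_one hn.ne' _
    have h2 : inner ℝ ξ (L (B i)) = ‖ξ‖ * inner ℝ η (L (B i)) := by
      conv_lhs => rw [hξη, inner_smul_left]
      simp
    have h3 : inner ℝ (B i) ξ = ‖ξ‖ * inner ℝ (B i) η := by
      conv_lhs => rw [hξη, inner_smul_right]
    simp only [ContinuousLinearMap.coe_coe, ContinuousLinearMap.comp_apply,
      add_apply, smul_apply, ContinuousLinearMap.id_apply,
      ContinuousLinearMap.smulRight_apply, innerSL_apply_apply, inner_add_right, inner_smul_right,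
      h1, h2, h3, real_inner_comm (L (B i)) (B i)]
    field_simp
  rw [key]
  refine mul_nonpos_of_nonneg_of_nonpos (Real.rpow_nonneg hn.le _) ?_
  obtain ⟨j, hj⟩ : ∃ j, B j = η := ⟨⟨η, hs rfl⟩, by rw [hB]⟩
  rw [← hj]
  by_cases hij : i = j
  · subst hij
    have := hL (B i)
    rw [real_inner_comm (L (B i)) (B i)]
    simp only [real_inner_self_eq_norm_sq, B.orthonormal.1]
    nlinarith
  · rw [B.orthonormal.2 hij]
    simpa using hL (B i)

lemma IsLocalMax.gradient_eq_of_sub [CompleteSpace E] {f g : E → ℝ} {a b x : E}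
    (hmax : IsLocalMax (fun y => f y - g y) x) (hf : HasGradientAt f a x)
    (hg : HasGradientAt g b x) : a = b := by
  rw [hasGradientAt_iff_hasFDerivAt] at hf hg
  have := hmax.hasFDerivAt_eq_zero (hf.fun_sub hg)
  rw [← map_sub, map_eq_zero_iff _ (InnerProductSpace.toDual ℝ E).injective] at this
  exact sub_eq_zero.1 this

/-- Comparison of `p`-Laplacians at a local maximum of the difference of two functions. -/
lemma trace_fderiv_pField_le [FiniteDimensional ℝ E] {p : ℝ} (hp : 1 < p) {f g : E → ℝ}
    {F G : E → E} {x : E} (hmax : IsLocalMax (fun y => f y - g y) x)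
    (hf : ∀ᶠ y in 𝓝 x, HasGradientAt f (F y) y) (hg : ∀ᶠ y in 𝓝 x, HasGradientAt g (G y) y)
    (hF : DifferentiableAt ℝ F x) (hG : DifferentiableAt ℝ G x) (heq : F x = G x)
    (hGx : G x ≠ 0) :
    LinearMap.trace ℝ E (fderiv ℝ (fun y => ‖F y‖ ^ (p - 2) • F y) x : E →ₗ[ℝ] E) ≤
      LinearMap.trace ℝ E (fderiv ℝ (fun y => ‖G y‖ ^ (p - 2) • G y) x : E →ₗ[ℝ] E) := by
  have hsub : ∀ᶠ y in 𝓝 x, HasGradientAt (fun y => f y - g y) (F y - G y) y := by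
    filter_upwards [hf, hg] with y h1 h2
    rw [hasGradientAt_iff_hasFDerivAt] at *
    rw [map_sub]
    exact h1.fun_sub h2
  have hpow : HasDerivAt (fun r : ℝ => r ^ (p - 2)) ((p - 2) * ‖G x‖ ^ (p - 2 - 1)) ‖G x‖ :=
    Real.hasDerivAt_rpow_const (Or.inl (norm_ne_zero_iff.2 hGx))
  have hA := hasFDerivAt_radial_smul hGx hpow
  have hFd := HasFDerivAt.comp x (g := fun ξ : E => ‖ξ‖ ^ (p - 2) • ξ) (f := F) (by rw [heq]; exact hA)
    hF.hasFDerivAt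
  have hGd := HasFDerivAt.comp x (g := fun ξ : E => ‖ξ‖ ^ (p - 2) • ξ) (f := G) hA hG.hasFDerivAt
  have h := trace_linearized_pLaplacian_nonpos hp hGx (fun e =>
    hmax.inner_hessian_nonpos hsub (hF.hasFDerivAt.fun_sub hG.hasFDerivAt) e)
  have e1 : fderiv ℝ (fun y => ‖F y‖ ^ (p - 2) • F y) x = _ := hFd.fderiv
  have e2 : fderiv ℝ (fun y => ‖G y‖ ^ (p - 2) • G y) x = _ := hGd.fderiv
  rw [e1, e2, ← sub_nonpos, ← map_sub, ← ContinuousLinearMap.toLinearMap_sub,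
    ← ContinuousLinearMap.comp_sub]
  exact h

end SecondOrder

section Barrier

/-- The base of the radial profile; the radial solutions `w` of `(E)` with nonvanishing gradient
are given by `-w'(r) = barrierSlope N p q C r`. -/
noncomputable def barrierBase (N : ℕ) (p q C t : ℝ) : ℝ :=
  t ^ (((N : ℝ) * (p - 1) - ((N : ℝ) - 1) * q) / (p - 1)) /
    (((N : ℝ) * (p - 1) - ((N : ℝ) - 1) * q) / (q + 1 - p)) + C

/-- Minus the derivative of a radial solution of `(E)`. -/
noncomputable def barrierSlope (N : ℕ) (p q C t : ℝ) : ℝ :=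
  t ^ (-(((N : ℝ) - 1) / (p - 1))) * barrierBase N p q C t ^ (-(1 / (q + 1 - p)))

/-- The radial solution of `(E)` with slope `barrierSlope` that vanishes at `r = 1`. -/
noncomputable def barrier (N : ℕ) (p q C r : ℝ) : ℝ :=
  ∫ t in r..1, barrierSlope N p q C t

variable {N : ℕ} {p q C : ℝ}

lemma barrierBase_mono (hp : 1 < p) (hq : p - 1 < q)
    (hm : 0 < (N : ℝ) * (p - 1) - ((N : ℝ) - 1) * q) {r t : ℝ} (hr : 0 ≤ r) (hrt : r ≤ t) :
    barrierBase N p q C r ≤ barrierBase N p q C t := by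
  have h1 : 0 < p - 1 := by linarith
  have h2 : 0 < q + 1 - p := by linarith
  unfold barrierBase
  gcongr

lemma hasDerivAt_barrierBase (hp : 1 < p) (hq : p - 1 < q)
    (hm : 0 < (N : ℝ) * (p - 1) - ((N : ℝ) - 1) * q) {t : ℝ} (ht : 0 < t) :
    HasDerivAt (barrierBase N p q C)
      ((q + 1 - p) / (p - 1) *
        t ^ (((N : ℝ) * (p - 1) - ((N : ℝ) - 1) * q) / (p - 1) - 1)) t := by
  have h1 : 0 < p - 1 := by linarith
  have h2 : 0 < q + 1 - p := by linarith
  have h := ((Real.hasDerivAt_rpow_const (x := t)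
    (p := ((N : ℝ) * (p - 1) - ((N : ℝ) - 1) * q) / (p - 1)) (Or.inl ht.ne')).div_const
    (((N : ℝ) * (p - 1) - ((N : ℝ) - 1) * q) / (q + 1 - p))).add_const C
  refine h.congr_deriv ?_
  field_simp

lemma continuousAt_barrierBase {t : ℝ} (ht : 0 < t) : ContinuousAt (barrierBase N p q C) t := by
  unfold barrierBase
  exact ((Real.continuousAt_rpow_const _ _ (Or.inl ht.ne')).div_const _).add_const _

lemma continuousAt_barrierSlope {t : ℝ} (ht : 0 < t) (hb : 0 < barrierBase N p q C t) :
    ContinuousAt (barrierSlope N p q C) t :=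
  (Real.continuousAt_rpow_const _ _ (Or.inl ht.ne')).mul
    ((continuousAt_barrierBase ht).rpow_const (Or.inl hb.ne'))

lemma barrierSlope_pos {t : ℝ} (ht : 0 < t) (hb : 0 < barrierBase N p q C t) :
    0 < barrierSlope N p q C t :=
  mul_pos (Real.rpow_pos_of_pos ht _) (Real.rpow_pos_of_pos hb _)

lemma intervalIntegrable_barrierSlope (hp : 1 < p) (hq : p - 1 < q)
    (hm : 0 < (N : ℝ) * (p - 1) - ((N : ℝ) - 1) * q) {r : ℝ} (hr : 0 < r) (hr1 : r ≤ 1)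
    (hb : 0 < barrierBase N p q C r) :
    IntervalIntegrable (barrierSlope N p q C) volume r 1 := by
  refine ContinuousOn.intervalIntegrable fun t ht => ContinuousAt.continuousWithinAt ?_
  rw [uIcc_of_le hr1] at ht
  exact continuousAt_barrierSlope (hr.trans_le ht.1) (hb.trans_le (barrierBase_mono hp hq hm hr.le ht.1))

lemma hasDerivAt_barrier (hp : 1 < p) (hq : p - 1 < q)
    (hm : 0 < (N : ℝ) * (p - 1) - ((N : ℝ) - 1) * q) {r : ℝ} (hr : 0 < r) (hr1 : r ≤ 1)
    (hb : 0 < barrierBase N p q C r) :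
    HasDerivAt (barrier N p q C) (-barrierSlope N p q C r) r := by
  have hc := continuousAt_barrierSlope hr hb
  refine intervalIntegral.integral_hasDerivAt_left
    (intervalIntegrable_barrierSlope hp hq hm hr hr1 hb) ?_ hc
  refine Measurable.stronglyMeasurable ?_ |>.stronglyMeasurableAtFilter
  unfold barrierSlope barrierBase
  fun_prop

lemma barrier_one : barrier N p q C 1 = 0 := intervalIntegral.integral_same

/-- The slope of the scaled barrier solves a Bernoulli equation in divergence form. -/
lemma hasDerivAt_barrier_flux (hp : 1 < p) (hq : p - 1 < q)
    (hm : 0 < (N : ℝ) * (p - 1) - ((N : ℝ) - 1) * q) {t τ : ℝ} (ht : 0 < t) (hτ : 0 < τ)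
    (hb : 0 < barrierBase N p q C t) :
    ∃ φ' : ℝ, HasDerivAt (fun r => -((τ * barrierSlope N p q C r) ^ (p - 1) / r)) φ' t ∧
      N * (-((τ * barrierSlope N p q C t) ^ (p - 1) / t)) + t * φ'
        = τ ^ (p - 1) * barrierSlope N p q C t ^ q := by
  have h1 : 0 < p - 1 := by linarith
  have h2 : 0 < q + 1 - p := by linarith
  have hform : (fun r => -((τ * barrierSlope N p q C r) ^ (p - 1) / r)) =ᶠ[𝓝 t]
      fun r => -(τ ^ (p - 1) *
        (r ^ (-(N : ℝ)) * barrierBase N p q C r ^ (-((p - 1) / (q + 1 - p))))) := by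
    filter_upwards [lt_mem_nhds ht, (continuousAt_barrierBase ht).eventually (lt_mem_nhds hb)]
      with r hr hbr
    have e1 : r ^ (-(N : ℝ)) = r ^ (-(((N : ℝ) - 1) / (p - 1)) * (p - 1)) / r := by
      rw [← Real.rpow_sub_one hr.ne']
      congr 1
      field_simp
      ring
    rw [e1, Real.mul_rpow hτ.le (barrierSlope_pos hr hbr).le, barrierSlope,
      Real.mul_rpow (Real.rpow_nonneg hr.le _) (Real.rpow_nonneg hbr.le _), ← Real.rpow_mul hr.le,
      ← Real.rpow_mul hbr.le,
      show -(1 / (q + 1 - p)) * (p - 1) = -((p - 1) / (q + 1 - p)) by ring]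
    ring
  have hd := (((Real.hasDerivAt_rpow_const (x := t) (p := -(N : ℝ)) (Or.inl ht.ne')).mul
    ((hasDerivAt_barrierBase (C := C) hp hq hm ht).rpow_const (p := -((p - 1) / (q + 1 - p)))
      (Or.inl hb.ne'))).const_mul (τ ^ (p - 1))).neg
  refine ⟨_, hd.congr_of_eventuallyEq hform, ?_⟩
  have hself : -((τ * barrierSlope N p q C t) ^ (p - 1) / t) = -(τ ^ (p - 1) *
      (t ^ (-(N : ℝ)) * barrierBase N p q C t ^ (-((p - 1) / (q + 1 - p))))) := hform.self_of_nhds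
  rw [hself]
  have e2 : t ^ (-(N : ℝ) - 1) = t ^ (-(N : ℝ)) / t := Real.rpow_sub_one ht.ne' _
  have e3 : t ^ (((N : ℝ) * (p - 1) - ((N : ℝ) - 1) * q) / (p - 1) - 1)
      = t ^ (((N : ℝ) * (p - 1) - ((N : ℝ) - 1) * q) / (p - 1)) / t := Real.rpow_sub_one ht.ne' _
  have e4 : barrierSlope N p q C t ^ q =
      t ^ (-(N : ℝ)) * t ^ (((N : ℝ) * (p - 1) - ((N : ℝ) - 1) * q) / (p - 1)) *
        barrierBase N p q C t ^ (-((p - 1) / (q + 1 - p)) - 1) := by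
    rw [barrierSlope, Real.mul_rpow (Real.rpow_nonneg ht.le _) (Real.rpow_nonneg hb.le _),
      ← Real.rpow_mul ht.le, ← Real.rpow_mul hb.le, ← Real.rpow_add ht]
    congr 2
    · field_simp
      ring
    · field_simp
      ring
  rw [e4, e2, e3]
  field_simp
  ring

end Barrier

section BarrierField

variable {N : ℕ} {p q C τ : ℝ} {x : EuclideanSpace ℝ (Fin N)}

/-- The gradient of the scaled barrier. -/
noncomputable def barrierGrad (N : ℕ) (p q C τ : ℝ) (y : EuclideanSpace ℝ (Fin N)) :
    EuclideanSpace ℝ (Fin N) :=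
  (-(τ * barrierSlope N p q C ‖y‖) / ‖y‖) • y

lemma norm_barrierGrad (hx : x ≠ 0) (hτ : 0 < τ) (hb : 0 < barrierBase N p q C ‖x‖) :
    ‖barrierGrad N p q C τ x‖ = τ * barrierSlope N p q C ‖x‖ := by
  have hn : 0 < ‖x‖ := norm_pos_iff.2 hx
  have := mul_pos hτ (barrierSlope_pos hn hb)
  rw [barrierGrad, norm_smul, Real.norm_eq_abs, abs_div, abs_neg, abs_of_pos this, abs_norm,
    div_mul_cancel₀ _ hn.ne']

lemma hasGradientAt_barrier (hp : 1 < p) (hq : p - 1 < q)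
    (hm : 0 < (N : ℝ) * (p - 1) - ((N : ℝ) - 1) * q) (hx : x ≠ 0) (hx1 : ‖x‖ ≤ 1)
    (hb : 0 < barrierBase N p q C ‖x‖) :
    HasGradientAt (fun y => τ * barrier N p q C ‖y‖) (barrierGrad N p q C τ x) x := by
  have h := (hasDerivAt_barrier hp hq hm (norm_pos_iff.2 hx) hx1 hb).const_mul τ
  rw [barrierGrad, ← mul_neg]
  exact hasGradientAt_radial hx h

lemma eventually_barrierBase_norm_pos (hx : x ≠ 0) (hb : 0 < barrierBase N p q C ‖x‖) :
    ∀ᶠ y in 𝓝 x, y ≠ 0 ∧ 0 < barrierBase N p q C ‖y‖ := by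
  have h : ContinuousAt (fun y : EuclideanSpace ℝ (Fin N) => barrierBase N p q C ‖y‖) x :=
    ContinuousAt.comp (f := norm) (continuousAt_barrierBase (norm_pos_iff.2 hx))
      continuous_norm.continuousAt
  filter_upwards [isOpen_ne.mem_nhds hx, h.eventually (lt_mem_nhds hb)] with y h1 h2 using ⟨h1, h2⟩

lemma differentiableAt_barrierGrad (hp : 1 < p) (hq : p - 1 < q)
    (hm : 0 < (N : ℝ) * (p - 1) - ((N : ℝ) - 1) * q) (hx : x ≠ 0)
    (hb : 0 < barrierBase N p q C ‖x‖) :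
    DifferentiableAt ℝ (barrierGrad N p q C τ) x := by
  have hn : 0 < ‖x‖ := norm_pos_iff.2 hx
  have h := ((((Real.hasDerivAt_rpow_const (x := ‖x‖) (p := -(((N : ℝ) - 1) / (p - 1)))
    (Or.inl hn.ne')).mul ((hasDerivAt_barrierBase (C := C) hp hq hm hn).rpow_const
      (p := -(1 / (q + 1 - p))) (Or.inl hb.ne'))).const_mul τ).neg).div (hasDerivAt_id ‖x‖) hn.ne'
  exact (hasFDerivAt_radial_smul hx h).differentiableAt

lemma trace_fderiv_pField_barrierGrad (hp : 1 < p) (hq : p - 1 < q)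
    (hm : 0 < (N : ℝ) * (p - 1) - ((N : ℝ) - 1) * q) (hx : x ≠ 0) (hτ : 0 < τ)
    (hb : 0 < barrierBase N p q C ‖x‖) :
    LinearMap.trace ℝ (EuclideanSpace ℝ (Fin N))
      (fderiv ℝ (fun y => ‖barrierGrad N p q C τ y‖ ^ (p - 2) • barrierGrad N p q C τ y) x :
        EuclideanSpace ℝ (Fin N) →ₗ[ℝ] EuclideanSpace ℝ (Fin N))
      = τ ^ (p - 1) * barrierSlope N p q C ‖x‖ ^ q := by
  obtain ⟨φ', hφ, heq⟩ := hasDerivAt_barrier_flux hp hq hm (norm_pos_iff.2 hx) hτ hb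
  have hev : (fun y => ‖barrierGrad N p q C τ y‖ ^ (p - 2) • barrierGrad N p q C τ y) =ᶠ[𝓝 x]
      fun y => (-((τ * barrierSlope N p q C ‖y‖) ^ (p - 1) / ‖y‖)) • y := by
    filter_upwards [eventually_barrierBase_norm_pos hx hb] with y hy
    have hs := mul_pos hτ (barrierSlope_pos (norm_pos_iff.2 hy.1) hy.2)
    rw [norm_barrierGrad hy.1 hτ hy.2, barrierGrad, smul_smul,
      show p - 1 = p - 2 + 1 by ring, Real.rpow_add_one hs.ne']
    congr 1
    ring
  rw [hev.fderiv_eq, trace_fderiv_radial_smul hx hφ, finrank_euclideanSpace_fin, heq]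

end BarrierField

section Comparison

variable {N : ℕ} {p q C τ : ℝ} {G : Set (EuclideanSpace ℝ (Fin N))}
  {u : EuclideanSpace ℝ (Fin N) → ℝ} {x : EuclideanSpace ℝ (Fin N)}

lemma IsStrongSolution.eventually_hasGradientAt (hu : IsStrongSolution p q G u) (hG : IsOpen G)
    (hx : x ∈ G) : ∀ᶠ y in 𝓝 x, HasGradientAt u (gradient u y) y := by
  filter_upwards [hG.mem_nhds hx] with y hy
  exact ((hu.1.contDiffAt (hG.mem_nhds hy)).differentiableAt one_ne_zero).hasGradientAt

lemma IsStrongSolution.differentiableAt_gradient (hu : IsStrongSolution p q G u) (hG : IsOpen G)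
    (hx : x ∈ G) (hne : gradient u x ≠ 0) : DifferentiableAt ℝ (gradient u) x := by
  have hcont : ContinuousAt (gradient u) x :=
    (InnerProductSpace.toDual ℝ _).symm.continuous.continuousAt.comp
      ((hu.1.continuousOn_fderiv_of_isOpen hG le_rfl).continuousAt (hG.mem_nhds hx))
  have hmem : {x | x ∈ G ∧ gradient u x ≠ 0} ∈ 𝓝 x :=
    inter_mem (hG.mem_nhds hx) (hcont (isOpen_ne.mem_nhds hne))
  have hd : DifferentiableAt ℝ (fderiv ℝ u) x :=
    ((hu.2.1.contDiffAt hmem).fderiv_right (m := 1) (by norm_num)).differentiableAt one_ne_zero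
  exact (InnerProductSpace.toDual ℝ _).symm.differentiable.differentiableAt.comp x hd

/-- A strong solution does not touch a strict supersolution from below. -/
lemma IsStrongSolution.not_isLocalMax_sub_barrier (hp : 1 < p) (hq : p - 1 < q)
    (hm : 0 < (N : ℝ) * (p - 1) - ((N : ℝ) - 1) * q) (hu : IsStrongSolution p q G u)
    (hG : IsOpen G) (hx : x ∈ G) (hx0 : x ≠ 0) (hx1 : ‖x‖ < 1)
    (hb : 0 < barrierBase N p q C ‖x‖) (hτ : 1 < τ) :
    ¬ IsLocalMax (fun y => u y - τ * barrier N p q C ‖y‖) x := by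
  intro hmax
  have hτ0 : 0 < τ := by linarith
  have hs := barrierSlope_pos (norm_pos_iff.2 hx0) hb
  have hu1 := hu.eventually_hasGradientAt hG hx
  have hW : ∀ᶠ y in 𝓝 x, HasGradientAt (fun y => τ * barrier N p q C ‖y‖)
      (barrierGrad N p q C τ y) y := by
    filter_upwards [eventually_barrierBase_norm_pos hx0 hb,
      continuous_norm.continuousAt.eventually (gt_mem_nhds hx1)] with y h1 h2
    exact hasGradientAt_barrier hp hq hm h1.1 h2.le h1.2
  have heq := hmax.gradient_eq_of_sub hu1.self_of_nhds hW.self_of_nhds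
  have hne : barrierGrad N p q C τ x ≠ 0 := by
    rw [← norm_pos_iff, norm_barrierGrad hx0 hτ0 hb]; positivity
  have h := trace_fderiv_pField_le hp hmax hu1 hW
    (hu.differentiableAt_gradient hG hx (heq ▸ hne)) (differentiableAt_barrierGrad hp hq hm hx0 hb)
    heq hne
  have h' := (hu.2.2 x hx).2
  rw [heq, norm_barrierGrad hx0 hτ0 hb, Real.mul_rpow hτ0.le hs.le] at h'
  rw [trace_fderiv_pField_barrierGrad hp hq hm hx0 hτ0 hb] at h
  have hlt : τ ^ (p - 1) < τ ^ q := Real.rpow_lt_rpow_of_exponent_lt hτ hq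
  exact absurd (h'.symm.trans_le h) (not_le.2 (mul_lt_mul_of_pos_right hlt (Real.rpow_pos_of_pos hs q)))

/-- A strong solution does not touch a strict subsolution from above. -/
lemma IsStrongSolution.not_isLocalMax_barrier_sub (hp : 1 < p) (hq : p - 1 < q)
    (hm : 0 < (N : ℝ) * (p - 1) - ((N : ℝ) - 1) * q) (hu : IsStrongSolution p q G u)
    (hG : IsOpen G) (hx : x ∈ G) (hx0 : x ≠ 0) (hx1 : ‖x‖ < 1)
    (hb : 0 < barrierBase N p q C ‖x‖) (hτ0 : 0 < τ) (hτ : τ < 1) :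
    ¬ IsLocalMax (fun y => τ * barrier N p q C ‖y‖ - u y) x := by
  intro hmax
  have hs := barrierSlope_pos (norm_pos_iff.2 hx0) hb
  have hu1 := hu.eventually_hasGradientAt hG hx
  have hW : ∀ᶠ y in 𝓝 x, HasGradientAt (fun y => τ * barrier N p q C ‖y‖)
      (barrierGrad N p q C τ y) y := by
    filter_upwards [eventually_barrierBase_norm_pos hx0 hb,
      continuous_norm.continuousAt.eventually (gt_mem_nhds hx1)] with y h1 h2
    exact hasGradientAt_barrier hp hq hm h1.1 h2.le h1.2
  have heq := hmax.gradient_eq_of_sub hW.self_of_nhds hu1.self_of_nhds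
  have hne : gradient u x ≠ 0 := by
    rw [← heq, ← norm_pos_iff, norm_barrierGrad hx0 hτ0 hb]; positivity
  have h := trace_fderiv_pField_le hp hmax hW hu1 (differentiableAt_barrierGrad hp hq hm hx0 hb)
    (hu.differentiableAt_gradient hG hx hne) heq hne
  have h' := (hu.2.2 x hx).2
  rw [← heq, norm_barrierGrad hx0 hτ0 hb, Real.mul_rpow hτ0.le hs.le] at h'
  rw [trace_fderiv_pField_barrierGrad hp hq hm hx0 hτ0 hb] at h
  have hlt : τ ^ q < τ ^ (p - 1) := Real.rpow_lt_rpow_of_exponent_gt hτ0 hτ hq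
  exact absurd (h.trans_eq h') (not_le.2 (mul_lt_mul_of_pos_right hlt (Real.rpow_pos_of_pos hs q)))

end Comparison

section BarrierBounds

variable {N : ℕ} {p q C : ℝ}

lemma barrier_le_sub (hp : 1 < p) (hq : p - 1 < q)
    (hm : 0 < (N : ℝ) * (p - 1) - ((N : ℝ) - 1) * q) {r : ℝ} (hr : 0 < r) (hr1 : r ≤ 1)
    (hb : 0 < barrierBase N p q C r) {Φ φ : ℝ → ℝ}
    (hΦ : ∀ t ∈ Icc r 1, HasDerivAt Φ (-φ t) t)
    (hle : ∀ t ∈ Icc r 1, barrierSlope N p q C t ≤ φ t) :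
    barrier N p q C r ≤ Φ r - Φ 1 := by
  have hd : ∀ t ∈ Icc r 1, HasDerivAt (fun t => barrier N p q C t - Φ t)
      (-barrierSlope N p q C t - -φ t) t := fun t ht =>
    (hasDerivAt_barrier hp hq hm (hr.trans_le ht.1) ht.2
      (hb.trans_le (barrierBase_mono hp hq hm hr.le ht.1))).fun_sub (hΦ t ht)
  have hmono : MonotoneOn (fun t => barrier N p q C t - Φ t) (Icc r 1) := by
    refine monotoneOn_of_hasDerivWithinAt_nonneg (convex_Icc r 1)
      (fun t ht => (hd t ht).continuousAt.continuousWithinAt)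
      (fun t ht => (hd t (interior_subset ht)).hasDerivWithinAt) fun t ht => ?_
    linarith [hle t (interior_subset ht)]
  have h := hmono (left_mem_Icc.2 hr1) (right_mem_Icc.2 hr1) hr1
  simp only [barrier_one] at h
  linarith

lemma sub_le_barrier (hp : 1 < p) (hq : p - 1 < q)
    (hm : 0 < (N : ℝ) * (p - 1) - ((N : ℝ) - 1) * q) {r : ℝ} (hr : 0 < r) (hr1 : r ≤ 1)
    (hb : 0 < barrierBase N p q C r) {Φ φ : ℝ → ℝ}
    (hΦ : ∀ t ∈ Icc r 1, HasDerivAt Φ (-φ t) t)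
    (hle : ∀ t ∈ Icc r 1, φ t ≤ barrierSlope N p q C t) :
    Φ r - Φ 1 ≤ barrier N p q C r := by
  have hd : ∀ t ∈ Icc r 1, HasDerivAt (fun t => Φ t - barrier N p q C t)
      (-φ t - -barrierSlope N p q C t) t := fun t ht =>
    (hΦ t ht).fun_sub (hasDerivAt_barrier hp hq hm (hr.trans_le ht.1) ht.2
      (hb.trans_le (barrierBase_mono hp hq hm hr.le ht.1)))
  have hmono : MonotoneOn (fun t => Φ t - barrier N p q C t) (Icc r 1) := by
    refine monotoneOn_of_hasDerivWithinAt_nonneg (convex_Icc r 1)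
      (fun t ht => (hd t ht).continuousAt.continuousWithinAt)
      (fun t ht => (hd t (interior_subset ht)).hasDerivWithinAt) fun t ht => ?_
    linarith [hle t (interior_subset ht)]
  have h := hmono (left_mem_Icc.2 hr1) (right_mem_Icc.2 hr1) hr1
  simp only [barrier_one] at h
  linarith

/-- The constant `λ_{N,p,q}`. -/
noncomputable def singularCoeff (N : ℕ) (p q : ℝ) : ℝ :=
  ((p - q) / (q + 1 - p))⁻¹ *
    (((N : ℝ) * (p - 1) - ((N : ℝ) - 1) * q) / (q + 1 - p)) ^ (1 / (q + 1 - p))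

/-- The factor comparing the barrier with the singular radial solution on `[r, 1]`. -/
noncomputable def barrierFactor (N : ℕ) (p q r C : ℝ) : ℝ :=
  (1 + C * ((((N : ℝ) * (p - 1) - ((N : ℝ) - 1) * q) / (q + 1 - p)) *
    r ^ (-(((N : ℝ) * (p - 1) - ((N : ℝ) - 1) * q) / (p - 1))))) ^ (-(1 / (q + 1 - p)))

lemma barrierBase_eq_mul (hq : p - 1 < q)
    (hm : 0 < (N : ℝ) * (p - 1) - ((N : ℝ) - 1) * q) {t : ℝ} (ht : 0 < t) :
    barrierBase N p q C t = t ^ (((N : ℝ) * (p - 1) - ((N : ℝ) - 1) * q) / (p - 1)) /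
      (((N : ℝ) * (p - 1) - ((N : ℝ) - 1) * q) / (q + 1 - p)) *
      (1 + C * ((((N : ℝ) * (p - 1) - ((N : ℝ) - 1) * q) / (q + 1 - p)) *
        t ^ (-(((N : ℝ) * (p - 1) - ((N : ℝ) - 1) * q) / (p - 1))))) := by
  have h2 : 0 < q + 1 - p := by linarith
  have hB : 0 < ((N : ℝ) * (p - 1) - ((N : ℝ) - 1) * q) / (q + 1 - p) := div_pos hm h2
  have hT := Real.rpow_pos_of_pos ht (((N : ℝ) * (p - 1) - ((N : ℝ) - 1) * q) / (p - 1))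
  rw [barrierBase, Real.rpow_neg ht.le]
  generalize ((N : ℝ) * (p - 1) - ((N : ℝ) - 1) * q) / (q + 1 - p) = B at *
  generalize t ^ (((N : ℝ) * (p - 1) - ((N : ℝ) - 1) * q) / (p - 1)) = T at *
  field_simp

lemma barrierSlope_eq_mul (hp : 1 < p) (hq : p - 1 < q)
    (hm : 0 < (N : ℝ) * (p - 1) - ((N : ℝ) - 1) * q) {t : ℝ} (ht : 0 < t)
    (hb : 0 < barrierBase N p q C t) :
    0 < 1 + C * ((((N : ℝ) * (p - 1) - ((N : ℝ) - 1) * q) / (q + 1 - p)) *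
        t ^ (-(((N : ℝ) * (p - 1) - ((N : ℝ) - 1) * q) / (p - 1)))) ∧
    barrierSlope N p q C t = barrierFactor N p q t C *
      ((((N : ℝ) * (p - 1) - ((N : ℝ) - 1) * q) / (q + 1 - p)) ^ (1 / (q + 1 - p)) *
        t ^ (-((p - q) / (q + 1 - p)) - 1)) := by
  have h1 : 0 < p - 1 := by linarith
  have h2 : 0 < q + 1 - p := by linarith
  have hB : 0 < ((N : ℝ) * (p - 1) - ((N : ℝ) - 1) * q) / (q + 1 - p) := div_pos hm h2
  have hT := Real.rpow_pos_of_pos ht (((N : ℝ) * (p - 1) - ((N : ℝ) - 1) * q) / (p - 1))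
  have hTB := div_pos hT hB
  have hpos : 0 < 1 + C * ((((N : ℝ) * (p - 1) - ((N : ℝ) - 1) * q) / (q + 1 - p)) *
        t ^ (-(((N : ℝ) * (p - 1) - ((N : ℝ) - 1) * q) / (p - 1)))) := by
    rw [barrierBase_eq_mul hq hm ht] at hb
    exact pos_of_mul_pos_right hb hTB.le
  refine ⟨hpos, ?_⟩
  have e : t ^ (-((p - q) / (q + 1 - p)) - 1) = t ^ (-(((N : ℝ) - 1) / (p - 1))) *
      t ^ (((N : ℝ) * (p - 1) - ((N : ℝ) - 1) * q) / (p - 1) * -(1 / (q + 1 - p))) := by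
    rw [← Real.rpow_add ht]
    congr 1
    field_simp
    ring
  rw [barrierSlope, barrierBase_eq_mul hq hm ht, Real.mul_rpow hTB.le hpos.le,
    Real.div_rpow hT.le hB.le, ← Real.rpow_mul ht.le, e, barrierFactor,
    Real.rpow_neg hB.le, div_inv_eq_mul]
  ring

lemma hasDerivAt_singularCoeff_mul_rpow (hq : p - 1 < q) (hqp : q < p) (k : ℝ) {t : ℝ}
    (ht : 0 < t) :
    HasDerivAt (fun t => k * (singularCoeff N p q * t ^ (-((p - q) / (q + 1 - p)))))
      (-(k * ((((N : ℝ) * (p - 1) - ((N : ℝ) - 1) * q) / (q + 1 - p)) ^ (1 / (q + 1 - p)) *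
        t ^ (-((p - q) / (q + 1 - p)) - 1)))) t := by
  have hβ : (p - q) / (q + 1 - p) ≠ 0 := (div_pos (by linarith) (by linarith)).ne'
  refine (((Real.hasDerivAt_rpow_const (Or.inl ht.ne')).const_mul
    (singularCoeff N p q)).const_mul k).congr_deriv ?_
  rw [singularCoeff]
  generalize (p - q) / (q + 1 - p) = β at *
  field_simp

lemma barrier_le_factor_mul (hp : 1 < p) (hq : p - 1 < q) (hqp : q < p)
    (hm : 0 < (N : ℝ) * (p - 1) - ((N : ℝ) - 1) * q) {r : ℝ} (hr : 0 < r) (hr1 : r ≤ 1)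
    (hb : 0 < barrierBase N p q C r) (hC : C ≤ 0) :
    barrier N p q C r ≤ barrierFactor N p q r C *
      (singularCoeff N p q * (r ^ (-((p - q) / (q + 1 - p))) - 1)) := by
  have h1 : 0 < p - 1 := by linarith
  have h2 : 0 < q + 1 - p := by linarith
  have hB : 0 < ((N : ℝ) * (p - 1) - ((N : ℝ) - 1) * q) / (q + 1 - p) := div_pos hm h2
  have h := barrier_le_sub hp hq hm hr hr1 hb
    (fun t ht => hasDerivAt_singularCoeff_mul_rpow (N := N) hq hqp (barrierFactor N p q r C)
      (hr.trans_le ht.1)) fun t ht => by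
    have ht0 := hr.trans_le ht.1
    rw [(barrierSlope_eq_mul hp hq hm ht0 (hb.trans_le (barrierBase_mono hp hq hm hr.le ht.1))).2]
    refine mul_le_mul_of_nonneg_right ?_
      (mul_nonneg (Real.rpow_nonneg hB.le _) (Real.rpow_nonneg ht0.le _))
    refine Real.rpow_le_rpow_of_nonpos (barrierSlope_eq_mul hp hq hm hr hb).1 ?_
      (neg_nonpos.2 (one_div_pos.2 h2).le)
    have := Real.rpow_le_rpow_of_nonpos hr ht.1 (neg_nonpos.2 (div_pos hm h1).le)
    have := mul_le_mul_of_nonpos_left (mul_le_mul_of_nonneg_left this hB.le) hC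
    linarith
  refine h.trans_eq ?_
  simp only [Real.one_rpow]
  ring

lemma factor_mul_le_barrier (hp : 1 < p) (hq : p - 1 < q) (hqp : q < p)
    (hm : 0 < (N : ℝ) * (p - 1) - ((N : ℝ) - 1) * q) {r : ℝ} (hr : 0 < r) (hr1 : r ≤ 1)
    (hb : 0 < barrierBase N p q C r) (hC : 0 ≤ C) :
    barrierFactor N p q r C * (singularCoeff N p q * (r ^ (-((p - q) / (q + 1 - p))) - 1)) ≤
      barrier N p q C r := by
  have h1 : 0 < p - 1 := by linarith
  have h2 : 0 < q + 1 - p := by linarith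
  have hB : 0 < ((N : ℝ) * (p - 1) - ((N : ℝ) - 1) * q) / (q + 1 - p) := div_pos hm h2
  have h := sub_le_barrier hp hq hm hr hr1 hb
    (fun t ht => hasDerivAt_singularCoeff_mul_rpow (N := N) hq hqp (barrierFactor N p q r C)
      (hr.trans_le ht.1)) fun t ht => by
    have ht0 := hr.trans_le ht.1
    have hs := barrierSlope_eq_mul hp hq hm ht0
      (hb.trans_le (barrierBase_mono hp hq hm hr.le ht.1))
    rw [hs.2]
    refine mul_le_mul_of_nonneg_right ?_
      (mul_nonneg (Real.rpow_nonneg hB.le _) (Real.rpow_nonneg ht0.le _))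
    refine Real.rpow_le_rpow_of_nonpos hs.1 ?_ (neg_nonpos.2 (one_div_pos.2 h2).le)
    have := Real.rpow_le_rpow_of_nonpos hr ht.1 (neg_nonpos.2 (div_pos hm h1).le)
    have := mul_le_mul_of_nonneg_left (mul_le_mul_of_nonneg_left this hB.le) hC
    linarith
  refine le_trans (le_of_eq ?_) h
  simp only [Real.one_rpow]
  ring

lemma tendsto_barrierFactor (N : ℕ) (p q r : ℝ) :
    Tendsto (barrierFactor N p q r) (𝓝 0) (𝓝 1) := by
  have hc : ContinuousAt (barrierFactor N p q r) 0 := by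
    unfold barrierFactor
    refine ContinuousAt.rpow_const (by fun_prop) (Or.inl (by simp))
  simpa [ContinuousAt, barrierFactor] using hc

/-- For `C < 0` the barrier blows up where its base vanishes. -/
lemma exists_le_barrier (hp : 1 < p) (hq : p - 1 < q) (hqp : q < p) (hN : 1 ≤ (N : ℝ))
    (hm : 0 < (N : ℝ) * (p - 1) - ((N : ℝ) - 1) * q) (hC : C < 0) {r : ℝ} (hr : 0 < r)
    (hr1 : r ≤ 1) (hb : 0 < barrierBase N p q C r) (K : ℝ) :
    ∃ t, 0 < t ∧ t < r ∧ 0 < barrierBase N p q C t ∧ K ≤ barrier N p q C t := by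
  have h1 : 0 < p - 1 := by linarith
  have h2 : 0 < q + 1 - p := by linarith
  have hpq : 0 < p - q := by linarith
  have hβ : 0 < (p - q) / (q + 1 - p) := div_pos hpq h2
  have hk : 0 < (p - 1) / (p - q) := div_pos h1 hpq
  have hB : 0 < ((N : ℝ) * (p - 1) - ((N : ℝ) - 1) * q) / (q + 1 - p) := div_pos hm h2
  have hθ : 0 < ((N : ℝ) * (p - 1) - ((N : ℝ) - 1) * q) / (p - 1) := div_pos hm h1
  obtain ⟨g, hgK, hg0, hgb⟩ : ∃ g : ℝ, K ≤ (p - 1) / (p - q) * g ^ (-((p - q) / (q + 1 - p))) -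
      (p - 1) / (p - q) * barrierBase N p q C 1 ^ (-((p - q) / (q + 1 - p))) ∧ 0 < g ∧
      g < barrierBase N p q C r := by
    have ht : Tendsto (fun g : ℝ => (p - 1) / (p - q) * g ^ (-((p - q) / (q + 1 - p))) -
        (p - 1) / (p - q) * barrierBase N p q C 1 ^ (-((p - q) / (q + 1 - p)))) (𝓝[>] 0) atTop :=
      tendsto_atTop_add_const_right _ _
        ((tendsto_rpow_neg_nhdsGT_zero (neg_neg_of_pos hβ)).const_mul_atTop hk)
    exact ((ht.eventually_ge_atTop K).and (Ioo_mem_nhdsGT hb)).exists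
  have hgC : 0 < (g - C) * (((N : ℝ) * (p - 1) - ((N : ℝ) - 1) * q) / (q + 1 - p)) :=
    mul_pos (by linarith) hB
  set t := ((g - C) * (((N : ℝ) * (p - 1) - ((N : ℝ) - 1) * q) / (q + 1 - p))) ^
    (((N : ℝ) * (p - 1) - ((N : ℝ) - 1) * q) / (p - 1))⁻¹ with htdef
  have ht0 : 0 < t := Real.rpow_pos_of_pos hgC _
  have hbt : barrierBase N p q C t = g := by
    rw [barrierBase, htdef, Real.rpow_inv_rpow hgC.le hθ.ne', mul_div_assoc, div_self hB.ne']
    ring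
  have htr : t < r := by
    by_contra! h
    exact absurd (barrierBase_mono (C := C) hp hq hm hr.le h) (by rw [hbt]; exact not_le.2 hgb)
  refine ⟨t, ht0, htr, hbt ▸ hg0, hgK.trans ?_⟩
  rw [← hbt]
  refine sub_le_barrier (Φ := fun t => (p - 1) / (p - q) *
      barrierBase N p q C t ^ (-((p - q) / (q + 1 - p))))
    (φ := fun t => t ^ (((N : ℝ) * (p - 1) - ((N : ℝ) - 1) * q) / (p - 1) - 1) *
      barrierBase N p q C t ^ (-(1 / (q + 1 - p)))) hp hq hm ht0 (htr.le.trans hr1) (hbt ▸ hg0) ?_ ?_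
  · intro s hs
    have hs0 := ht0.trans_le hs.1
    have hbs : 0 < barrierBase N p q C s :=
      (hbt ▸ hg0 : 0 < barrierBase N p q C t).trans_le (barrierBase_mono hp hq hm ht0.le hs.1)
    refine (((hasDerivAt_barrierBase hp hq hm hs0).rpow_const (Or.inl hbs.ne')).const_mul
      _).congr_deriv ?_
    rw [show -((p - q) / (q + 1 - p)) - 1 = -(1 / (q + 1 - p)) by field_simp; ring]
    field_simp
  · intro s hs
    have hs0 := ht0.trans_le hs.1
    have hbs : 0 < barrierBase N p q C s :=
      (hbt ▸ hg0 : 0 < barrierBase N p q C t).trans_le (barrierBase_mono hp hq hm ht0.le hs.1)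
    refine mul_le_mul_of_nonneg_right
      (Real.rpow_le_rpow_of_exponent_ge hs0 hs.2 ?_) (Real.rpow_nonneg hbs.le _)
    rw [← sub_nonneg]
    have : ((N : ℝ) * (p - 1) - ((N : ℝ) - 1) * q) / (p - 1) - 1 - -(((N : ℝ) - 1) / (p - 1))
        = ((N : ℝ) - 1) * (p - q) / (p - 1) := by field_simp; ring
    rw [this]
    exact div_nonneg (mul_nonneg (by linarith) hpq.le) h1.le

/-- For `C > 0` the barrier is at most of the order of the fundamental solution. -/
lemma barrier_le_mul_mup (hp : 1 < p) (hpN : p ≤ N) (hq : p - 1 < q)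
    (hm : 0 < (N : ℝ) * (p - 1) - ((N : ℝ) - 1) * q) (hC : 0 < C)
    {x : EuclideanSpace ℝ (Fin N)} (hx : 0 < ‖x‖) (hx1 : ‖x‖ ≤ 1) :
    barrier N p q C ‖x‖ ≤ C ^ (-(1 / (q + 1 - p))) * mup N p x := by
  have h1 : 0 < p - 1 := by linarith
  have h2 : 0 < q + 1 - p := by linarith
  have hB : 0 < ((N : ℝ) * (p - 1) - ((N : ℝ) - 1) * q) / (q + 1 - p) := div_pos hm h2
  have hCb : ∀ t : ℝ, 0 < t → C ≤ barrierBase N p q C t := fun t ht => by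
    rw [barrierBase, le_add_iff_nonneg_left]
    exact div_nonneg (Real.rpow_nonneg ht.le _) hB.le
  have hk : 0 < C ^ (-(1 / (q + 1 - p))) := Real.rpow_pos_of_pos hC _
  have hslope : ∀ t ∈ Icc ‖x‖ 1, barrierSlope N p q C t ≤
      C ^ (-(1 / (q + 1 - p))) * t ^ (-(((N : ℝ) - 1) / (p - 1))) := fun t ht => by
    have ht0 := hx.trans_le ht.1
    rw [mul_comm]
    exact mul_le_mul_of_nonneg_left (Real.rpow_le_rpow_of_nonpos hC (hCb t ht0)
      (neg_nonpos.2 (one_div_pos.2 h2).le)) (Real.rpow_nonneg ht0.le _)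
  unfold mup
  split_ifs with hlt
  · have hNp : 0 < (N : ℝ) - p := by linarith
    have h := barrier_le_sub (Φ := fun t => C ^ (-(1 / (q + 1 - p))) *
      ((p - 1) / ((N : ℝ) - p) * t ^ ((p - (N : ℝ)) / (p - 1)))) hp hq hm hx hx1
      (hC.trans_le (hCb _ hx)) (fun t ht => by
        refine (((Real.hasDerivAt_rpow_const (Or.inl (hx.trans_le ht.1).ne')).const_mul
          _).const_mul _).congr_deriv ?_
        rw [show (p - (N : ℝ)) / (p - 1) - 1 = -(((N : ℝ) - 1) / (p - 1)) by field_simp; ring,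
          show (p - (N : ℝ)) / (p - 1) = -(((N : ℝ) - p) / (p - 1)) by ring]
        field_simp) hslope
    refine h.trans (sub_le_self _ ?_)
    rw [Real.one_rpow]
    positivity
  · have hNp : p = N := le_antisymm hpN (not_lt.1 hlt)
    have h := barrier_le_sub (Φ := fun t => C ^ (-(1 / (q + 1 - p))) * -Real.log t) hp hq hm hx hx1
      (hC.trans_le (hCb _ hx)) (fun t ht => by
        refine (((Real.hasDerivAt_log (hx.trans_le ht.1).ne').neg).const_mul _).congr_deriv ?_
        rw [← hNp, div_self h1.ne', Real.rpow_neg_one]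
        ring) hslope
    simpa using h

lemma mup_pos (hp : 1 < p) {x : EuclideanSpace ℝ (Fin N)} (hx : 0 < ‖x‖) (hx1 : ‖x‖ < 1) :
    0 < mup N p x := by
  unfold mup
  split_ifs with hlt
  · exact mul_pos (div_pos (by linarith) (by linarith)) (Real.rpow_pos_of_pos hx _)
  · exact neg_pos.2 (Real.log_neg hx hx1)

end BarrierBounds

section Main

variable {N : ℕ} {p q C τ : ℝ} {G : Set (EuclideanSpace ℝ (Fin N))}
  {u : EuclideanSpace ℝ (Fin N) → ℝ} {x : EuclideanSpace ℝ (Fin N)}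

lemma isCompact_annulus {E : Type*} [NormedAddCommGroup E] [ProperSpace E] (δ : ℝ) :
    IsCompact {y : E | δ ≤ ‖y‖ ∧ ‖y‖ ≤ 1} := by
  refine (isCompact_closedBall (0 : E) 1).of_isClosed_subset
    ((isClosed_le continuous_const continuous_norm).inter
      (isClosed_le continuous_norm continuous_const)) fun y hy => ?_
  simpa using hy.2

lemma le_on_annulus_of_not_isLocalMax {E : Type*} [NormedAddCommGroup E] [ProperSpace E]
    {h : E → ℝ} {δ m : ℝ} {x : E} (hx : δ ≤ ‖x‖ ∧ ‖x‖ ≤ 1)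
    (hc : ContinuousOn h {y : E | δ ≤ ‖y‖ ∧ ‖y‖ ≤ 1})
    (hin : ∀ y, ‖y‖ = δ → h y ≤ m) (hout : ∀ y, ‖y‖ = 1 → h y ≤ m)
    (hmax : ∀ y, δ < ‖y‖ → ‖y‖ < 1 → ¬ IsLocalMax h y) : h x ≤ m := by
  obtain ⟨z, hz, hzmax⟩ := (isCompact_annulus δ).exists_isMaxOn ⟨x, hx⟩ hc
  refine (hzmax hx).trans ?_
  rcases hz.1.eq_or_lt with h1 | h1
  · exact hin z h1.symm
  rcases hz.2.eq_or_lt with h2 | h2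
  · exact hout z h2
  refine absurd (hzmax.isLocalMax ?_) (hmax z h1 h2)
  filter_upwards [continuous_norm.continuousAt.eventually (lt_mem_nhds h1),
    continuous_norm.continuousAt.eventually (gt_mem_nhds h2)] with y h3 h4 using ⟨h3.le, h4.le⟩

lemma continuousOn_barrier_norm (hp : 1 < p) (hq : p - 1 < q)
    (hm : 0 < (N : ℝ) * (p - 1) - ((N : ℝ) - 1) * q) {δ : ℝ} (hδ : 0 < δ)
    (hb : 0 < barrierBase N p q C δ) :
    ContinuousOn (fun y : EuclideanSpace ℝ (Fin N) => τ * barrier N p q C ‖y‖)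
      {y | δ ≤ ‖y‖ ∧ ‖y‖ ≤ 1} := fun _ hy =>
  (hasGradientAt_barrier hp hq hm (norm_pos_iff.1 (hδ.trans_le hy.1)) hy.2
    (hb.trans_le (barrierBase_mono hp hq hm hδ.le hy.1))).continuousAt.continuousWithinAt

lemma IsStrongSolution.le_barrier (hN : 1 ≤ (N : ℝ)) (hp : 1 < p) (hq : p - 1 < q) (hqp : q < p)
    (hm : 0 < (N : ℝ) * (p - 1) - ((N : ℝ) - 1) * q) (hu : IsStrongSolution p q G u)
    (hG : IsOpen G) (hGsub : ∀ y : EuclideanSpace ℝ (Fin N), 0 < ‖y‖ → ‖y‖ ≤ 1 → y ∈ G)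
    {M : ℝ} (hM0 : 0 ≤ M) (hM : ∀ y, ‖y‖ = 1 → u y ≤ M) (hτ : 1 < τ) (hC : C < 0)
    (hx : 0 < ‖x‖) (hx1 : ‖x‖ < 1) (hb : 0 < barrierBase N p q C ‖x‖) :
    u x ≤ τ * barrier N p q C ‖x‖ + M := by
  have h1 : 0 < p - 1 := by linarith
  have h2 : 0 < q + 1 - p := by linarith
  have hB : 0 < ((N : ℝ) * (p - 1) - ((N : ℝ) - 1) * q) / (q + 1 - p) := div_pos hm h2
  have hθ : 0 < ((N : ℝ) * (p - 1) - ((N : ℝ) - 1) * q) / (p - 1) := div_pos hm h1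
  have hCB : 0 < -C * (((N : ℝ) * (p - 1) - ((N : ℝ) - 1) * q) / (q + 1 - p)) :=
    mul_pos (by linarith) hB
  obtain ⟨r₀, hr₀, hbr₀⟩ : ∃ r₀ : ℝ, 0 < r₀ ∧ barrierBase N p q C r₀ = 0 := by
    refine ⟨_, Real.rpow_pos_of_pos hCB
      (((N : ℝ) * (p - 1) - ((N : ℝ) - 1) * q) / (p - 1))⁻¹, ?_⟩
    rw [barrierBase, Real.rpow_inv_rpow hCB.le hθ.ne', mul_div_assoc, div_self hB.ne']
    ring
  obtain ⟨K, hK⟩ := (isCompact_annulus r₀).bddAbove_image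
    (hu.1.continuousOn.mono fun y hy => hGsub y (hr₀.trans_le hy.1) hy.2)
  obtain ⟨δ, hδ, hδx, hbδ, hKδ⟩ := exists_le_barrier hp hq hqp hN hm hC hx hx1.le hb (K / τ)
  have hr₀δ : r₀ ≤ δ := by
    by_contra! h
    linarith [barrierBase_mono (C := C) hp hq hm hδ.le h.le]
  have hτ0 : 0 < τ := by linarith
  rw [div_le_iff₀' hτ0] at hKδ
  rw [← sub_le_iff_le_add']
  refine le_on_annulus_of_not_isLocalMax (h := fun y => u y - τ * barrier N p q C ‖y‖) (δ := δ)
    ⟨hδx.le, hx1.le⟩ ?_ ?_ ?_ ?_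
  · exact (hu.1.continuousOn.mono fun y hy => hGsub y (hδ.trans_le hy.1) hy.2).sub
      (continuousOn_barrier_norm hp hq hm hδ hbδ)
  · intro y hy
    have := hK (mem_image_of_mem u (show r₀ ≤ ‖y‖ ∧ ‖y‖ ≤ 1 by constructor <;> linarith))
    simp only [hy]
    linarith
  · intro y hy
    simpa [hy, barrier_one] using hM y hy
  · intro y hy hy1
    have hy0 := hδ.trans hy
    exact hu.not_isLocalMax_sub_barrier hp hq hm hG (hGsub y hy0 hy1.le) (norm_pos_iff.1 hy0) hy1
      (hbδ.trans_le (barrierBase_mono hp hq hm hδ.le hy.le)) hτ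

lemma IsStrongSolution.barrier_le (hp : 1 < p) (hpN : p ≤ N) (hq : p - 1 < q)
    (hm : 0 < (N : ℝ) * (p - 1) - ((N : ℝ) - 1) * q) (hu : IsStrongSolution p q G u)
    (hG : IsOpen G) (hGsub : ∀ y : EuclideanSpace ℝ (Fin N), 0 < ‖y‖ → ‖y‖ ≤ 1 → y ∈ G)
    (hpos : ∀ y, ‖y‖ = 1 → 0 < u y)
    (hinf : Tendsto (fun x => u x / mup N p x) (𝓝[≠] (0 : EuclideanSpace ℝ (Fin N))) atTop)
    (hτ0 : 0 < τ) (hτ : τ < 1) (hC : 0 < C) (hx : 0 < ‖x‖) (hx1 : ‖x‖ < 1) :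
    τ * barrier N p q C ‖x‖ ≤ u x := by
  have h2 : 0 < q + 1 - p := by linarith
  have hB : 0 < ((N : ℝ) * (p - 1) - ((N : ℝ) - 1) * q) / (q + 1 - p) := div_pos hm h2
  have hbase : ∀ t : ℝ, 0 < t → 0 < barrierBase N p q C t := fun t ht =>
    add_pos (div_pos (Real.rpow_pos_of_pos ht _) hB) hC
  have hev := hinf.eventually_ge_atTop (τ * C ^ (-(1 / (q + 1 - p))))
  rw [eventually_nhdsWithin_iff, Metric.eventually_nhds_iff] at hev
  obtain ⟨ε, hε, hev⟩ := hev
  set δ := min (ε / 2) ‖x‖ with hδdef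
  have hδ : 0 < δ := lt_min (by linarith) hx
  have hδε : δ < ε := (min_le_left _ _).trans_lt (by linarith)
  have hδx : δ ≤ ‖x‖ := min_le_right _ _
  rw [← sub_nonpos]
  refine le_on_annulus_of_not_isLocalMax (h := fun y => τ * barrier N p q C ‖y‖ - u y) (δ := δ)
    ⟨hδx, hx1.le⟩ ?_ ?_ ?_ ?_
  · exact (continuousOn_barrier_norm hp hq hm hδ (hbase δ hδ)).sub
      (hu.1.continuousOn.mono fun y hy => hGsub y (hδ.trans_le hy.1) hy.2)
  · intro y hy
    have hy0 : 0 < ‖y‖ := hy ▸ hδ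
    have hy1 : ‖y‖ < 1 := by linarith
    have h := hev (y := y) (by rw [dist_zero_right, hy]; exact hδε) (norm_pos_iff.1 hy0)
    rw [le_div_iff₀ (mup_pos hp hy0 hy1), mul_assoc] at h
    have h' := mul_le_mul_of_nonneg_left (barrier_le_mul_mup hp hpN hq hm hC hy0 hy1.le) hτ0.le
    simpa using h'.trans h
  · intro y hy
    simpa [hy, barrier_one] using (hpos y hy).le
  · intro y hy hy1
    have hy0 := hδ.trans hy
    exact hu.not_isLocalMax_barrier_sub hp hq hm hG (hGsub y hy0 hy1.le) (norm_pos_iff.1 hy0) hy1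
      (hbase _ hy0) hτ0 hτ

lemma tendsto_mul_barrierFactor (N : ℕ) (p q r A M : ℝ) :
    Tendsto (fun τ => τ * (barrierFactor N p q r (1 - τ) * A) + M) (𝓝 1) (𝓝 (A + M)) := by
  have h : Tendsto (fun τ : ℝ => 1 - τ) (𝓝 1) (𝓝 0) := by
    simpa using (continuous_const.sub continuous_id).tendsto (1 : ℝ) (f := fun τ : ℝ => 1 - τ)
  simpa using (tendsto_id.mul (((tendsto_barrierFactor N p q r).comp h).mul_const A)).add_const M

end Main

/-- Strongly singular behaviour: if `u/μ_p → ∞` at the singularity, then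
`|x|^{β_q} u(x) → λ_{N,p,q}`, with two-sided bounds. -/
theorem singularity_strong (N : ℕ) (hN : 2 ≤ N) (p q : ℝ) (hp1 : 1 < p) (hpN : p ≤ N)
    (hq1 : p - 1 < q) (hq2 : q < (N : ℝ) * (p - 1) / ((N : ℝ) - 1))
    (Ω : Set (EuclideanSpace ℝ (Fin N))) (hΩ : IsOpen Ω)
    (hball : Metric.closedBall (0 : EuclideanSpace ℝ (Fin N)) 1 ⊆ Ω)
    (u : EuclideanSpace ℝ (Fin N) → ℝ) (hu : IsStrongSolution p q (Ω \ {0}) u)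
    (hpos : ∀ x ∈ Ω \ {0}, 0 < u x)
    (hliminf : Filter.Tendsto (fun x => u x / mup N p x)
      (𝓝[≠] (0 : EuclideanSpace ℝ (Fin N))) Filter.atTop) :
    Filter.Tendsto (fun x => ‖x‖ ^ ((p - q) / (q + 1 - p)) * u x)
      (𝓝[≠] (0 : EuclideanSpace ℝ (Fin N)))
      (nhds (((p - q) / (q + 1 - p))⁻¹
        * (((N : ℝ) * (p - 1) - ((N : ℝ) - 1) * q) / (q + 1 - p)) ^ (1 / (q + 1 - p)))) ∧
    ∀ x : EuclideanSpace ℝ (Fin N), 0 < ‖x‖ → ‖x‖ < 1 →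
      ((p - q) / (q + 1 - p))⁻¹
          * (((N : ℝ) * (p - 1) - ((N : ℝ) - 1) * q) / (q + 1 - p)) ^ (1 / (q + 1 - p))
          * (‖x‖ ^ (-((p - q) / (q + 1 - p))) - 1) ≤ u x ∧
      u x ≤ ((p - q) / (q + 1 - p))⁻¹
          * (((N : ℝ) * (p - 1) - ((N : ℝ) - 1) * q) / (q + 1 - p)) ^ (1 / (q + 1 - p))
          * (‖x‖ ^ (-((p - q) / (q + 1 - p))) - 1)
        + sSup (u '' Metric.sphere (0 : EuclideanSpace ℝ (Fin N)) 1) := by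
  have hN2 : (2 : ℝ) ≤ N := by exact_mod_cast hN
  have hN1 : (0 : ℝ) < N - 1 := by linarith
  have hm : 0 < (N : ℝ) * (p - 1) - ((N : ℝ) - 1) * q := by
    rw [lt_div_iff₀ hN1] at hq2
    linarith
  have hqp : q < p := by
    refine lt_of_mul_lt_mul_left (a := (N : ℝ) - 1) ?_ hN1.le
    nlinarith
  have h2 : 0 < q + 1 - p := by linarith
  have hβ : 0 < (p - q) / (q + 1 - p) := div_pos (by linarith) h2
  have hG : IsOpen (Ω \ {0}) := hΩ.sdiff isClosed_singleton
  have hGsub : ∀ y : EuclideanSpace ℝ (Fin N), 0 < ‖y‖ → ‖y‖ ≤ 1 → y ∈ Ω \ {0} := fun y h0 h1 =>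
    ⟨hball (by simpa using h1), norm_pos_iff.1 h0⟩
  have hsphere : ∀ y : EuclideanSpace ℝ (Fin N), ‖y‖ = 1 → y ∈ Ω \ {0} := fun y hy =>
    hGsub y (by linarith) hy.le
  set M := sSup (u '' Metric.sphere (0 : EuclideanSpace ℝ (Fin N)) 1)
  have hM : ∀ y : EuclideanSpace ℝ (Fin N), ‖y‖ = 1 → u y ≤ M := fun y hy =>
    le_csSup ((isCompact_sphere _ _).bddAbove_image
      (hu.1.continuousOn.mono fun z hz => hsphere z (by simpa using hz)))
      (mem_image_of_mem u (by simpa using hy))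
  have hbounds : ∀ x : EuclideanSpace ℝ (Fin N), 0 < ‖x‖ → ‖x‖ < 1 →
      singularCoeff N p q * (‖x‖ ^ (-((p - q) / (q + 1 - p))) - 1) ≤ u x ∧
      u x ≤ singularCoeff N p q * (‖x‖ ^ (-((p - q) / (q + 1 - p))) - 1) + M := by
    intro x hx hx1
    constructor
    · have ht := tendsto_mul_barrierFactor N p q ‖x‖
        (singularCoeff N p q * (‖x‖ ^ (-((p - q) / (q + 1 - p))) - 1)) 0
      rw [add_zero] at ht
      refine le_of_tendsto (x := 𝓝[<] (1 : ℝ)) (ht.mono_left nhdsWithin_le_nhds) ?_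
      filter_upwards [Ioo_mem_nhdsLT (zero_lt_one' ℝ)] with τ hτ
      have hC : 0 < 1 - τ := by linarith [hτ.2]
      have hb : 0 < barrierBase N p q (1 - τ) ‖x‖ :=
        add_pos (div_pos (Real.rpow_pos_of_pos hx _) (div_pos hm h2)) hC
      rw [add_zero]
      exact (mul_le_mul_of_nonneg_left
        (factor_mul_le_barrier hp1 hq1 hqp hm hx hx1.le hb hC.le) hτ.1.le).trans
        (hu.barrier_le hp1 hpN hq1 hm hG hGsub (fun y hy => hpos y (hsphere y hy)) hliminf
          hτ.1 hτ.2 hC hx hx1)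
    · have hunit : ‖‖x‖⁻¹ • x‖ = 1 := norm_smul_inv_norm (𝕜 := ℝ) (norm_pos_iff.1 hx)
      have hM0 : 0 ≤ M := (hpos _ (hsphere _ hunit)).le.trans (hM _ hunit)
      have ht := tendsto_mul_barrierFactor N p q ‖x‖
        (singularCoeff N p q * (‖x‖ ^ (-((p - q) / (q + 1 - p))) - 1)) M
      refine ge_of_tendsto (x := 𝓝[>] (1 : ℝ)) (ht.mono_left nhdsWithin_le_nhds) ?_
      have hbase : ∀ᶠ τ : ℝ in 𝓝 1, 0 < barrierBase N p q (1 - τ) ‖x‖ := by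
        have hc : Continuous fun τ : ℝ => barrierBase N p q (1 - τ) ‖x‖ := by
          unfold barrierBase
          fun_prop
        refine hc.continuousAt.eventually (lt_mem_nhds ?_)
        change 0 < barrierBase N p q (1 - 1) ‖x‖
        rw [barrierBase, sub_self, add_zero]
        exact div_pos (Real.rpow_pos_of_pos hx _) (div_pos hm h2)
      filter_upwards [self_mem_nhdsWithin, nhdsWithin_le_nhds hbase] with τ hτ hb
      have hτ1 : 1 < τ := hτ
      have hC : 1 - τ < 0 := by linarith
      refine (hu.le_barrier (by linarith) hp1 hq1 hqp hm hG hGsub hM0 hM hτ1 hC hx hx1 hb).trans ?_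
      gcongr
      exact barrier_le_factor_mul hp1 hq1 hqp hm hx hx1.le hb hC.le
  refine ⟨?_, hbounds⟩
  have hpow : Tendsto (fun x : EuclideanSpace ℝ (Fin N) => ‖x‖ ^ ((p - q) / (q + 1 - p)))
      (𝓝[≠] 0) (𝓝 0) := by
    have h := (continuous_norm.rpow_const fun _ => Or.inr hβ.le).tendsto
      (0 : EuclideanSpace ℝ (Fin N)) (f := fun x => ‖x‖ ^ ((p - q) / (q + 1 - p)))
    simp only [norm_zero, Real.zero_rpow hβ.ne'] at h
    exact h.mono_left nhdsWithin_le_nhds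
  have hlow : Tendsto (fun x : EuclideanSpace ℝ (Fin N) =>
      singularCoeff N p q * (1 - ‖x‖ ^ ((p - q) / (q + 1 - p))))
      (𝓝[≠] 0) (𝓝 (singularCoeff N p q)) := by
    simpa using (hpow.const_sub 1).const_mul (singularCoeff N p q)
  have hup : Tendsto (fun x : EuclideanSpace ℝ (Fin N) =>
      singularCoeff N p q * (1 - ‖x‖ ^ ((p - q) / (q + 1 - p))) +
        ‖x‖ ^ ((p - q) / (q + 1 - p)) * M)
      (𝓝[≠] 0) (𝓝 (singularCoeff N p q)) := by
    simpa using hlow.add (hpow.mul_const M)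
  have hmem : ∀ᶠ x in 𝓝[≠] (0 : EuclideanSpace ℝ (Fin N)), 0 < ‖x‖ ∧ ‖x‖ < 1 := by
    filter_upwards [self_mem_nhdsWithin, nhdsWithin_le_nhds (ball_mem_nhds _ one_pos)] with x h h'
    exact ⟨norm_pos_iff.2 h, by simpa using h'⟩
  have hmul : ∀ x : EuclideanSpace ℝ (Fin N), 0 < ‖x‖ →
      ‖x‖ ^ ((p - q) / (q + 1 - p)) *
        (singularCoeff N p q * (‖x‖ ^ (-((p - q) / (q + 1 - p))) - 1)) =
      singularCoeff N p q * (1 - ‖x‖ ^ ((p - q) / (q + 1 - p))) := fun x hx => by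
    have := (Real.rpow_pos_of_pos hx ((p - q) / (q + 1 - p))).ne'
    rw [Real.rpow_neg hx.le]
    field_simp
  refine tendsto_of_tendsto_of_tendsto_of_le_of_le' hlow hup ?_ ?_
  · filter_upwards [hmem] with x hx
    rw [← hmul x hx.1]
    exact mul_le_mul_of_nonneg_left (hbounds x hx.1 hx.2).1 (Real.rpow_nonneg hx.1.le _)
  · filter_upwards [hmem] with x hx
    rw [← hmul x hx.1, ← mul_add]
    exact mul_le_mul_of_nonneg_left (hbounds x hx.1 hx.2).2 (Real.rpow_nonneg hx.1.le _)
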